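/- arXiv:0908.3108 — 4 statements merged into one kernel-verified Lean document; each statement's English description precedes it below -/
import Mathlib

section
/- Let (D, F) be a good pair, X ⊆ ℝⁿ convex compact, A affine with A(X) ⊆ M, g ∈ ℝⁿ, and r ≥ 0. Then the function Φ_r(x, y; φ, α) = gᵀx − gᵀy + α·ln(∫_Ω e^{φ(ω)/α} p_{A(y)}(ω) P(dω)) + α·ln(∫_Ω e^{−φ(ω)/α} p_{A(x)}(ω) P(dω)) + 2αr is a continuous real-valued function on (X×X) × (F×(0,∞)) which is concave in (x, y) ∈ X×X and convex in (φ, α) ∈ F×(0,∞), and it possesses a well-defined saddle-point value: sup_{x,y∈X} inf_{φ∈F, α>0} Φ_r(x, y; φ, α) = inf_{φ∈F, α>0} sup_{x,y∈X} Φ_r(x, y; φ, α). -/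
open MeasureTheory Real Matrix Set
open scoped ENNReal

/-- A "good pair" `(𝒟, ℱ)` in the sense of Juditsky–Nemirovski:
a parametric family of positive probability densities `p μ`, `μ ∈ M`, on `(Ω, P)`,
together with a finite-dimensional linear space `F` of Borel functions on `Ω`
containing the constants, such that log-likelihood ratios belong to `F` and
`μ ↦ ln ∫ e^{φ} p_μ dP` is well defined (finite, witnessed by integrability)
and concave on `M` for every `φ ∈ F`. -/
structure GoodPair (Ω : Type*) [MeasurableSpace Ω] (P : Measure Ω)
    (E : Type*) [NormedAddCommGroup E] [NormedSpace ℝ E] where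
  M : Set E
  p : E → Ω → ℝ
  F : Submodule ℝ (Ω → ℝ)
  M_open : IsOpen M
  M_convex : Convex ℝ M
  p_meas : ∀ μ ∈ M, Measurable (p μ)
  p_pos : ∀ μ ∈ M, ∀ ω, 0 < p μ ω
  p_prob : ∀ μ ∈ M, ∫ ω, p μ ω ∂P = 1
  F_fd : FiniteDimensional ℝ F
  F_meas : ∀ φ ∈ F, Measurable φ
  F_const : ∀ c : ℝ, (fun _ : Ω => c) ∈ F
  logratio_mem : ∀ μ ∈ M, ∀ ν ∈ M, (fun ω => Real.log (p μ ω / p ν ω)) ∈ F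
  F_finite : ∀ φ ∈ F, ∀ μ ∈ M, Integrable (fun ω => Real.exp (φ ω) * p μ ω) P
  F_concave : ∀ φ ∈ F,
    ConcaveOn ℝ M (fun μ => Real.log (∫ ω, Real.exp (φ ω) * p μ ω ∂P))

variable {Ω : Type*} [MeasurableSpace Ω] {P : Measure Ω}
  {E : Type*} [NormedAddCommGroup E] [NormedSpace ℝ E] {n : ℕ}

/-- The distribution of the observation when the parameter is `μ`:
the measure with density `p μ` with respect to `P`. -/
noncomputable def obsMeasure (D : GoodPair Ω P E) (μ : E) : Measure Ω :=
  P.withDensity fun ω => ENNReal.ofReal (D.p μ ω)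

/-- The `ε`-risk of an estimate `ghat` of the linear form `gᵀx`, `x ∈ X`:
`inf {δ | sup_{x ∈ X} Prob_{ω ∼ p_{A(x)}·P} {|ghat ω - gᵀx| > δ} < ε}`. -/
noncomputable def Risk (D : GoodPair Ω P E) (A : (Fin n → ℝ) →ᵃ[ℝ] E)
    (g : Fin n → ℝ) (X : Set (Fin n → ℝ)) (ghat : Ω → ℝ) (ε : ℝ) : ℝ :=
  sInf {δ : ℝ |
    (⨆ x ∈ X, obsMeasure D (A x) {ω | δ < |ghat ω - g ⬝ᵥ x|}) < ENNReal.ofReal ε}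

/-- The minimax optimal `ε`-risk over all (Borel) estimates. -/
noncomputable def RiskStar (D : GoodPair Ω P E) (A : (Fin n → ℝ) →ᵃ[ℝ] E)
    (g : Fin n → ℝ) (X : Set (Fin n → ℝ)) (ε : ℝ) : ℝ :=
  sInf {ρ : ℝ | ∃ ghat : Ω → ℝ, Measurable ghat ∧ ρ = Risk D A g X ghat ε}

/-- The minimax optimal `ε`-risk over affine estimates, i.e. estimates `φ ∈ F`. -/
noncomputable def RiskAff (D : GoodPair Ω P E) (A : (Fin n → ℝ) →ᵃ[ℝ] E)
    (g : Fin n → ℝ) (X : Set (Fin n → ℝ)) (ε : ℝ) : ℝ :=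
  sInf {ρ : ℝ | ∃ φ ∈ D.F, ρ = Risk D A g X φ ε}

/-- The function `Φ_r(x, y; φ, α)`. -/
noncomputable def PhiFun (D : GoodPair Ω P E) (A : (Fin n → ℝ) →ᵃ[ℝ] E)
    (g : Fin n → ℝ) (r : ℝ) (x y : Fin n → ℝ) (φ : Ω → ℝ) (α : ℝ) : ℝ :=
  g ⬝ᵥ x - g ⬝ᵥ y
    + α * Real.log (∫ ω, Real.exp (φ ω / α) * D.p (A y) ω ∂P)
    + α * Real.log (∫ ω, Real.exp (-φ ω / α) * D.p (A x) ω ∂P)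
    + 2 * α * r

/-- `Φ_*(r)` defined through the sup-inf value:
`2Φ_*(r) = sup_{x,y ∈ X} inf_{φ ∈ F, α > 0} Φ_r(x, y; φ, α)`. -/
noncomputable def PhiStarSI (D : GoodPair Ω P E) (A : (Fin n → ℝ) →ᵃ[ℝ] E)
    (g : Fin n → ℝ) (X : Set (Fin n → ℝ)) (r : ℝ) : ℝ :=
  (1/2) * sSup {v : ℝ | ∃ x ∈ X, ∃ y ∈ X,
    v = sInf {w : ℝ | ∃ φ ∈ D.F, ∃ α : ℝ, 0 < α ∧ w = PhiFun D A g r x y φ α}}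

/-- `Φ_*(r)` defined through the inf-sup value:
`2Φ_*(r) = inf_{φ ∈ F, α > 0} sup_{x,y ∈ X} Φ_r(x, y; φ, α)`. -/
noncomputable def PhiStarIS (D : GoodPair Ω P E) (A : (Fin n → ℝ) →ᵃ[ℝ] E)
    (g : Fin n → ℝ) (X : Set (Fin n → ℝ)) (r : ℝ) : ℝ :=
  (1/2) * sInf {v : ℝ | ∃ φ ∈ D.F, ∃ α : ℝ, 0 < α ∧
    v = sSup {w : ℝ | ∃ x ∈ X, ∃ y ∈ X, w = PhiFun D A g r x y φ α}}

open scoped Topology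

/-- Uniform local Lipschitz bounds in the convex variable upgrade separate continuity to joint
continuity. -/
lemma continuousOn_uncurry_of_convexOn_of_continuousOn {G T : Type*}
    [NormedAddCommGroup G] [NormedSpace ℝ G] [FiniteDimensional ℝ G] [TopologicalSpace T]
    {f : G → T → ℝ} {s : Set T} (hconv : ∀ t ∈ s, ConvexOn ℝ univ fun e => f e t)
    (hcont : ∀ e, ContinuousOn (f e) s) :
    ContinuousOn (Function.uncurry f) (univ ×ˢ s) := by
  rintro ⟨e₀, t₀⟩ ⟨-, ht₀⟩
  obtain ⟨b, hb, -⟩ :=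
    exists_mem_interior_convexHull_affineBasis (Filter.univ_mem : (univ : Set G) ∈ 𝓝 e₀)
  obtain ⟨R, hR, hball⟩ := Metric.isOpen_iff.1 isOpen_interior e₀ hb
  set C : ℝ := ∑ i, |f (b i) t₀| + 1
  have hvert : ∀ᶠ t in 𝓝[s] t₀, ∀ i, f (b i) t < C := by
    rw [Filter.eventually_all]
    intro i
    refine (hcont (b i) t₀ ht₀).eventually_lt_const ?_
    have := Finset.single_le_sum (f := fun i => |f (b i) t₀|) (fun _ _ => abs_nonneg _)
      (Finset.mem_univ i)
    have := le_abs_self (f (b i) t₀)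
    simp only at *
    linarith
  have hcenter : ∀ᶠ t in 𝓝[s] t₀, f e₀ t₀ - 1 < f e₀ t :=
    (hcont e₀ t₀ ht₀).eventually_const_lt (by linarith)
  set u : Set T := {t | t ∈ s ∧ (∀ i, f (b i) t < C) ∧ f e₀ t₀ - 1 < f e₀ t}
  have hu_mem : u ∈ 𝓝[s] t₀ := by
    filter_upwards [self_mem_nhdsWithin, hvert, hcenter] with t h₁ h₂ h₃ using ⟨h₁, h₂, h₃⟩
  have hC0 : 0 < C := by positivity
  set B : ℝ := C + 2 * |f e₀ t₀| + 2
  have hupper : ∀ t ∈ u, ∀ a, dist a e₀ < R → f a t ≤ C := by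
    intro t ht a ha
    obtain ⟨_, ⟨i, rfl⟩, hi⟩ := (hconv t ht.1).exists_ge_of_mem_convexHull (subset_univ (range b))
      (interior_subset (hball ha))
    exact hi.trans (ht.2.1 i).le
  have habs : ∀ t ∈ u, ∀ a, dist a e₀ < R → |f a t| ≤ B := by
    intro t ht a ha
    have h₁ := hupper t ht a ha
    have h₂ := hupper t ht ((2 : ℝ) • e₀ - a) (by
      rw [dist_eq_norm] at ha ⊢
      rwa [← norm_neg, show -((2 : ℝ) • e₀ - a - e₀) = a - e₀ by module])
    have h₃ := (hconv t ht.1).2 (mem_univ a) (mem_univ ((2 : ℝ) • e₀ - a))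
      (show (0 : ℝ) ≤ 1 / 2 by norm_num) (show (0 : ℝ) ≤ 1 / 2 by norm_num) (by norm_num)
    rw [show (1 / 2 : ℝ) • a + (1 / 2 : ℝ) • ((2 : ℝ) • e₀ - a) = e₀ by module] at h₃
    simp only [smul_eq_mul] at h₃
    have h₄ := ht.2.2
    have h₅ := neg_abs_le (f e₀ t₀)
    have h₆ := abs_nonneg (f e₀ t₀)
    rw [abs_le]
    constructor <;> simp only [B] <;> linarith
  have hlip : ∀ t ∈ u, LipschitzOnWith (2 * B / (R / 2)).toNNReal (fun e => f e t)
      (Metric.ball e₀ (R - R / 2)) := fun t ht =>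
    ((hconv t ht.1).subset (subset_univ _) (convex_ball _ _)).lipschitzOnWith_of_abs_le
      (half_pos hR) (habs t ht)
  have hprod := continuousOn_prod_of_continuousOn_lipschitzOnWith (Function.uncurry f)
    (s := Metric.ball e₀ (R - R / 2)) (t := u) _
    (fun e _ => (hcont e).mono fun t ht => ht.1) hlip
  refine (hprod (e₀, t₀) ⟨Metric.mem_ball_self (by linarith),
    mem_of_mem_nhdsWithin ht₀ hu_mem⟩).mono_of_mem_nhdsWithin ?_
  rw [nhdsWithin_prod_eq, nhdsWithin_univ]
  exact Filter.prod_mem_prod (Metric.ball_mem_nhds _ (by linarith)) hu_mem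

/-- Version of `continuousOn_uncurry_of_convexOn_of_continuousOn` without a chosen norm. -/
lemma continuousOn_uncurry_of_convexOn_of_continuousOn_tvs {G T : Type*}
    [AddCommGroup G] [Module ℝ G] [TopologicalSpace G] [IsTopologicalAddGroup G]
    [ContinuousSMul ℝ G] [T2Space G] [FiniteDimensional ℝ G] [TopologicalSpace T]
    {f : G → T → ℝ} {s : Set T} (hconv : ∀ t ∈ s, ConvexOn ℝ univ fun e => f e t)
    (hcont : ∀ e, ContinuousOn (f e) s) :
    ContinuousOn (Function.uncurry f) (univ ×ˢ s) := by
  let Λ : G ≃L[ℝ] EuclideanSpace ℝ (Fin (Module.finrank ℝ G)) := toEuclidean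
  have h := continuousOn_uncurry_of_convexOn_of_continuousOn (f := fun v t => f (Λ.symm v) t)
    (s := s) (fun t ht => (hconv t ht).comp_linearMap Λ.symm.toLinearMap)
    (fun v => hcont _)
  have hmap : Continuous fun q : G × T => (Λ q.1, q.2) := by fun_prop
  refine (h.comp hmap.continuousOn fun q hq => ⟨mem_univ _, hq.2⟩).congr fun q _ => ?_
  simp [Function.uncurry]

/-- The perspective of a convex function is convex. -/
lemma ConvexOn.perspective {G : Type*} [AddCommGroup G] [Module ℝ G] {f : G → ℝ}
    (hf : ConvexOn ℝ univ f) :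
    ConvexOn ℝ {q : G × ℝ | 0 < q.2} fun q => q.2 * f (q.2⁻¹ • q.1) := by
  refine ⟨(convex_Ioi (0 : ℝ)).linear_preimage (LinearMap.snd ℝ G ℝ), ?_⟩
  rintro ⟨φ, α⟩ hα ⟨ψ, β⟩ hβ a b ha hb hab
  simp only [mem_ofPred_eq, Prod.smul_mk, Prod.mk_add_mk, smul_eq_mul] at hα hβ ⊢
  have hγ : 0 < a * α + b * β := by
    have := (convex_Ioi (0 : ℝ)) hα hβ ha hb hab
    simpa using this
  set γ := a * α + b * β
  have h := hf.2 (mem_univ (α⁻¹ • φ)) (mem_univ (β⁻¹ • ψ))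
    (show 0 ≤ a * α / γ by positivity) (show 0 ≤ b * β / γ by positivity)
    (by rw [← add_div, div_self hγ.ne'])
  have hcomb : (a * α / γ) • α⁻¹ • φ + (b * β / γ) • β⁻¹ • ψ = γ⁻¹ • (a • φ + b • ψ) := by
    rw [smul_add, smul_smul, smul_smul, smul_smul, smul_smul]
    congr 2 <;> field_simp
  rw [hcomb, smul_eq_mul, smul_eq_mul] at h
  calc γ * f (γ⁻¹ • (a • φ + b • ψ))
      ≤ γ * (a * α / γ * f (α⁻¹ • φ) + b * β / γ * f (β⁻¹ • ψ)) :=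
        mul_le_mul_of_nonneg_left h hγ.le
    _ = a * (α * f (α⁻¹ • φ)) + b * (β * f (β⁻¹ • ψ)) := by field_simp

/-- Sion's minimax theorem with one compact side: if against every `q ∈ Y` some `z ∈ X` achieves
the value `V`, then a single `z ∈ X` achieves it against all `q ∈ Y`. -/
lemma exists_forall_le_of_forall_exists_le {G H : Type*}
    [AddCommGroup G] [Module ℝ G] [TopologicalSpace G] [IsTopologicalAddGroup G]
    [ContinuousSMul ℝ G]
    [AddCommGroup H] [Module ℝ H] [TopologicalSpace H] [IsTopologicalAddGroup H]
    [ContinuousSMul ℝ H] {X : Set G} {Y : Set H} {f : G → H → ℝ}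
    (hXne : X.Nonempty) (hXcp : IsCompact X) (hXcv : Convex ℝ X) (hYcv : Convex ℝ Y)
    (hcontX : ∀ q ∈ Y, ContinuousOn (fun z => f z q) X)
    (hconc : ∀ q ∈ Y, ConcaveOn ℝ X fun z => f z q)
    (hcontY : ∀ z ∈ X, ContinuousOn (f z) Y)
    (hconv : ∀ z ∈ X, ConvexOn ℝ Y (f z))
    {V : ℝ} (hV : ∀ q ∈ Y, ∃ z ∈ X, V ≤ f z q) :
    ∃ z ∈ X, ∀ q ∈ Y, V ≤ f z q := by
  by_contra! hlt
  choose! q hqY hq using hlt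
  obtain ⟨t, ht⟩ := hXcp.elim_nhdsWithin_subcover' (fun z _ => {z' | f z' (q z) < V})
    fun z hz => (hcontX (q z) (hqY z hz) z hz).eventually_lt_const (hq z hz)
  obtain ⟨q₀, hq₀, h⟩ := Sion.exists_lt_iInf_of_lt_iInf_of_finite (X := X) (Y := Y)
    (f := fun z q => - f z q) hXne hXcp
    (fun q hq => (hcontX q hq).neg.lowerSemicontinuousOn)
    (fun q hq => (hconc q hq).neg.quasiconvexOn) hYcv
    (fun z hz => (hcontY z hz).neg.upperSemicontinuousOn)
    (fun z hz => (hconv z hz).neg.quasiconcaveOn) hXcv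
    (s := (fun z : X => q z) '' t) (t.finite_toSet.image _)
    (by rintro _ ⟨z, -, rfl⟩; exact hqY z z.2) (t := -V)
    (by
      intro z hz
      obtain ⟨w, hw, hzw⟩ := mem_iUnion₂.1 (ht hz)
      exact ⟨q w, ⟨w, hw, rfl⟩, neg_lt_neg hzw⟩)
  obtain ⟨z, hz, hVz⟩ := hV q₀ hq₀
  linarith [h z hz]

namespace GoodPair

/-- The function `F_φ(μ) = ln ∫ e^φ p_μ dP`. -/
noncomputable def logMGF (D : GoodPair Ω P E) (φ : Ω → ℝ) (μ : E) : ℝ :=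
  Real.log (∫ ω, Real.exp (φ ω) * D.p μ ω ∂P)

lemma integral_exp_mul_pos (D : GoodPair Ω P E) {φ : Ω → ℝ} (hφ : φ ∈ D.F) {μ : E}
    (hμ : μ ∈ D.M) : 0 < ∫ ω, Real.exp (φ ω) * D.p μ ω ∂P := by
  have hpos : ∀ ω, 0 < Real.exp (φ ω) * D.p μ ω := fun ω =>
    mul_pos (Real.exp_pos _) (D.p_pos μ hμ ω)
  rw [integral_pos_iff_support_of_nonneg (fun ω => (hpos ω).le) (D.F_finite φ hφ μ hμ)]
  have hsupp : Function.support (fun ω => Real.exp (φ ω) * D.p μ ω) = univ :=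
    eq_univ_of_forall fun ω => (hpos ω).ne'
  rw [hsupp, pos_iff_ne_zero]
  intro h
  have := D.p_prob μ hμ
  simp [Measure.measure_univ_eq_zero.1 h] at this

lemma convexOn_logMGF (D : GoodPair Ω P E) {μ : E} (hμ : μ ∈ D.M) :
    ConvexOn ℝ univ fun φ : D.F => D.logMGF φ μ := by
  refine ⟨convex_univ, ?_⟩
  intro φ _ ψ _ a b ha hb hab
  have hφ := D.integral_exp_mul_pos φ.2 hμ
  have hψ := D.integral_exp_mul_pos ψ.2 hμ
  have hint_φ := D.F_finite φ φ.2 μ hμ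
  have hint_ψ := D.F_finite ψ ψ.2 μ hμ
  set cφ := D.logMGF φ μ
  set cψ := D.logMGF ψ μ
  have hexp_φ : ∫ ω, Real.exp ((φ : Ω → ℝ) ω) * D.p μ ω ∂P = Real.exp cφ := (Real.exp_log hφ).symm
  have hexp_ψ : ∫ ω, Real.exp ((ψ : Ω → ℝ) ω) * D.p μ ω ∂P = Real.exp cψ := (Real.exp_log hψ).symm
  set K := a * cφ + b * cψ with hK
  simp only [smul_eq_mul]
  rw [logMGF, Real.log_le_iff_le_exp (D.integral_exp_mul_pos (a • φ + b • ψ).2 hμ)]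
  have hpt : ∀ ω, Real.exp (((a • φ + b • ψ : D.F) : Ω → ℝ) ω) * D.p μ ω ≤
      Real.exp K * (a * Real.exp (-cφ)) * (Real.exp ((φ : Ω → ℝ) ω) * D.p μ ω) +
      Real.exp K * (b * Real.exp (-cψ)) * (Real.exp ((ψ : Ω → ℝ) ω) * D.p μ ω) := by
    intro ω
    have h := convexOn_exp.2 (mem_univ ((φ : Ω → ℝ) ω - cφ)) (mem_univ ((ψ : Ω → ℝ) ω - cψ))
      ha hb hab
    simp only [smul_eq_mul] at h
    have hsplit : Real.exp (((a • φ + b • ψ : D.F) : Ω → ℝ) ω) =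
        Real.exp K * Real.exp (a * ((φ : Ω → ℝ) ω - cφ) + b * ((ψ : Ω → ℝ) ω - cψ)) := by
      rw [← Real.exp_add]
      congr 1
      simp [hK]
      ring
    rw [hsplit]
    calc _ ≤ Real.exp K * (a * Real.exp ((φ : Ω → ℝ) ω - cφ) + b * Real.exp ((ψ : Ω → ℝ) ω - cψ))
          * D.p μ ω := by
          gcongr
          exact (D.p_pos μ hμ ω).le
      _ = _ := by
          rw [sub_eq_add_neg, sub_eq_add_neg, Real.exp_add _ (-cφ), Real.exp_add _ (-cψ)]
          ring
  refine (integral_mono (D.F_finite _ (a • φ + b • ψ).2 μ hμ)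
    ((hint_φ.const_mul _).add (hint_ψ.const_mul _)) hpt).trans_eq ?_
  simp only [Pi.add_apply]
  rw [integral_add (hint_φ.const_mul _) (hint_ψ.const_mul _), integral_const_mul,
    integral_const_mul, hexp_φ, hexp_ψ]
  have h₁ : Real.exp (-cφ) * Real.exp cφ = 1 := by rw [← Real.exp_add]; simp
  have h₂ : Real.exp (-cψ) * Real.exp cψ = 1 := by rw [← Real.exp_add]; simp
  linear_combination Real.exp K * a * h₁ + Real.exp K * b * h₂ + Real.exp K * hab

lemma logMGF_zero (D : GoodPair Ω P E) {μ : E} (hμ : μ ∈ D.M) : D.logMGF 0 μ = 0 := by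
  simp [logMGF, D.p_prob μ hμ]

lemma logMGF_add_logMGF_neg_nonneg (D : GoodPair Ω P E) (φ : D.F) {μ : E} (hμ : μ ∈ D.M) :
    0 ≤ D.logMGF φ μ + D.logMGF (-φ : D.F) μ := by
  have h := (D.convexOn_logMGF hμ).2 (mem_univ φ) (mem_univ (-φ))
    (show (0 : ℝ) ≤ 1 / 2 by norm_num) (show (0 : ℝ) ≤ 1 / 2 by norm_num) (by norm_num)
  rw [show (1 / 2 : ℝ) • φ + (1 / 2 : ℝ) • -φ = 0 by module] at h
  simp only [smul_eq_mul, ZeroMemClass.coe_zero, D.logMGF_zero hμ] at h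
  linarith

lemma continuousOn_logMGF [FiniteDimensional ℝ E] (D : GoodPair Ω P E) :
    ContinuousOn (fun q : D.F × E => D.logMGF q.1 q.2) (univ ×ˢ D.M) := by
  have := D.F_fd
  exact continuousOn_uncurry_of_convexOn_of_continuousOn_tvs
    (f := fun (φ : D.F) μ => D.logMGF φ μ) (fun μ hμ => D.convexOn_logMGF hμ)
    fun φ => (D.F_concave φ φ.2).continuousOn D.M_open

end GoodPair

lemma PhiFun_eq_logMGF (D : GoodPair Ω P E) (A : (Fin n → ℝ) →ᵃ[ℝ] E) (g : Fin n → ℝ) (r : ℝ)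
    (x y : Fin n → ℝ) (φ : D.F) (α : ℝ) :
    PhiFun D A g r x y φ α = g ⬝ᵥ x - g ⬝ᵥ y + α * D.logMGF (α⁻¹ • φ : D.F) (A y)
      + α * D.logMGF (α⁻¹ • -φ : D.F) (A x) + 2 * α * r := by
  simp [PhiFun, GoodPair.logMGF, div_eq_inv_mul]

lemma continuousOn_PhiFun [FiniteDimensional ℝ E] (D : GoodPair Ω P E) {X : Set (Fin n → ℝ)}
    {A : (Fin n → ℝ) →ᵃ[ℝ] E} (hA : ∀ x ∈ X, A x ∈ D.M) (g : Fin n → ℝ) (r : ℝ) :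
    ContinuousOn
      (fun q : ((Fin n → ℝ) × (Fin n → ℝ)) × (D.F × ℝ) =>
        PhiFun D A g r q.1.1 q.1.2 (q.2.1 : Ω → ℝ) q.2.2)
      ((X ×ˢ X) ×ˢ ((Set.univ : Set D.F) ×ˢ Set.Ioi (0 : ℝ))) := by
  simp only [PhiFun_eq_logMGF]
  have hAc : Continuous A := A.continuous_of_finiteDimensional
  have hinv : ContinuousOn
      (fun q : ((Fin n → ℝ) × (Fin n → ℝ)) × (D.F × ℝ) => q.2.2⁻¹)
      ((X ×ˢ X) ×ˢ ((Set.univ : Set D.F) ×ˢ Set.Ioi (0 : ℝ))) :=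
    ContinuousOn.inv₀ (by fun_prop) fun q hq => (ne_of_gt hq.2.2)
  have hy := D.continuousOn_logMGF.comp
    (f := fun q : ((Fin n → ℝ) × (Fin n → ℝ)) × (D.F × ℝ) => (q.2.2⁻¹ • q.2.1, A q.1.2))
    (s := (X ×ˢ X) ×ˢ ((Set.univ : Set D.F) ×ˢ Set.Ioi (0 : ℝ)))
    (by fun_prop) (fun q hq => ⟨mem_univ _, hA _ hq.1.2⟩)
  have hx := D.continuousOn_logMGF.comp
    (f := fun q : ((Fin n → ℝ) × (Fin n → ℝ)) × (D.F × ℝ) => (q.2.2⁻¹ • -q.2.1, A q.1.1))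
    (s := (X ×ˢ X) ×ˢ ((Set.univ : Set D.F) ×ˢ Set.Ioi (0 : ℝ)))
    (by fun_prop) (fun q hq => ⟨mem_univ _, hA _ hq.1.1⟩)
  simp only [Function.comp_def] at hx hy
  have hg : Continuous fun x : Fin n → ℝ => g ⬝ᵥ x := by fun_prop
  fun_prop

lemma concaveOn_PhiFun (D : GoodPair Ω P E) {X : Set (Fin n → ℝ)} (hXcv : Convex ℝ X)
    {A : (Fin n → ℝ) →ᵃ[ℝ] E} (hA : ∀ x ∈ X, A x ∈ D.M) (g : Fin n → ℝ) (r : ℝ)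
    (φ : D.F) {α : ℝ} (hα : 0 < α) :
    ConcaveOn ℝ (X ×ˢ X)
      (fun q : (Fin n → ℝ) × (Fin n → ℝ) => PhiFun D A g r q.1 q.2 φ α) := by
  simp only [PhiFun_eq_logMGF]
  have hX2 : Convex ℝ (X ×ˢ X) := hXcv.prod hXcv
  have hconc (ψ : D.F) : ConcaveOn ℝ X fun x => α * D.logMGF ψ (A x) :=
    (((D.F_concave ψ ψ.2).comp_affineMap A).subset hA hXcv).smul hα.le
  have hy := ((hconc (α⁻¹ • φ)).comp_linearMap (LinearMap.snd ℝ (Fin n → ℝ) (Fin n → ℝ))).subset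
    (fun q (hq : q ∈ X ×ˢ X) => hq.2) hX2
  have hx := ((hconc (α⁻¹ • -φ)).comp_linearMap (LinearMap.fst ℝ (Fin n → ℝ) (Fin n → ℝ))).subset
    (fun q (hq : q ∈ X ×ˢ X) => hq.1) hX2
  have hlin : ConcaveOn ℝ (X ×ˢ X)
      fun q : (Fin n → ℝ) × (Fin n → ℝ) => g ⬝ᵥ q.1 - g ⬝ᵥ q.2 := by
    refine ⟨hX2, fun p _ q _ a b _ _ _ => le_of_eq ?_⟩
    simp only [Prod.fst_add, Prod.snd_add, Prod.smul_fst, Prod.smul_snd, dotProduct_add,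
      dotProduct_smul, smul_eq_mul]
    ring
  exact ((hlin.add hy).add hx).add (concaveOn_const _ hX2)

lemma convexOn_PhiFun (D : GoodPair Ω P E) (A : (Fin n → ℝ) →ᵃ[ℝ] E) (g : Fin n → ℝ) (r : ℝ)
    {x y : Fin n → ℝ} (hx : A x ∈ D.M) (hy : A y ∈ D.M) :
    ConvexOn ℝ {q : D.F × ℝ | 0 < q.2}
      (fun q : D.F × ℝ => PhiFun D A g r x y (q.1 : Ω → ℝ) q.2) := by
  simp only [PhiFun_eq_logMGF]
  have h₁ := (D.convexOn_logMGF hy).perspective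
  have h₂ := (D.convexOn_logMGF hx).perspective.comp_linearMap
    ((-LinearMap.id : D.F →ₗ[ℝ] D.F).prodMap (LinearMap.id : ℝ →ₗ[ℝ] ℝ))
  have hlin : ConvexOn ℝ {q : D.F × ℝ | 0 < q.2} fun q : D.F × ℝ => 2 * q.2 * r := by
    refine ⟨h₁.1, fun p _ q _ a b _ _ _ => le_of_eq ?_⟩
    simp only [Prod.snd_add, Prod.smul_snd, smul_eq_mul]
    ring
  exact (((convexOn_const _ h₁.1).add h₁).add h₂).add hlin

lemma PhiFun_self_nonneg (D : GoodPair Ω P E) (A : (Fin n → ℝ) →ᵃ[ℝ] E) (g : Fin n → ℝ) {r : ℝ}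
    (hr : 0 ≤ r) {x : Fin n → ℝ} (hx : A x ∈ D.M) (φ : D.F) {α : ℝ} (hα : 0 < α) :
    0 ≤ PhiFun D A g r x x φ α := by
  rw [PhiFun_eq_logMGF, smul_neg]
  have h := mul_nonneg hα.le (D.logMGF_add_logMGF_neg_nonneg (α⁻¹ • φ) hx)
  have := mul_nonneg hα.le hr
  linarith

/-- The function `Φ_r` is a continuous real-valued function on
`(X × X) × (F × (0,∞))`, concave in `(x, y) ∈ X × X`, convex in
`(φ, α) ∈ F × (0,∞)`, and possesses a well-defined saddle-point value:
`sup_{x,y∈X} inf_{φ∈F, α>0} Φ_r = inf_{φ∈F, α>0} sup_{x,y∈X} Φ_r`. -/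
theorem phi_saddle
    {Ω : Type*} [MeasurableSpace Ω] [TopologicalSpace Ω] [PolishSpace Ω] [BorelSpace Ω]
    {P : Measure Ω} [SigmaFinite P] {m n : ℕ}
    (D : GoodPair Ω P (Fin m → ℝ))
    (X : Set (Fin n → ℝ)) (hXne : X.Nonempty) (hXcp : IsCompact X) (hXcv : Convex ℝ X)
    (A : (Fin n → ℝ) →ᵃ[ℝ] (Fin m → ℝ)) (hA : ∀ x ∈ X, A x ∈ D.M)
    (g : Fin n → ℝ) (r : ℝ) (hr : 0 ≤ r) :
    ContinuousOn
      (fun q : ((Fin n → ℝ) × (Fin n → ℝ)) × (D.F × ℝ) =>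
        PhiFun D A g r q.1.1 q.1.2 (q.2.1 : Ω → ℝ) q.2.2)
      ((X ×ˢ X) ×ˢ ((Set.univ : Set D.F) ×ˢ Set.Ioi (0 : ℝ)))
    ∧ (∀ φ ∈ D.F, ∀ α : ℝ, 0 < α →
        ConcaveOn ℝ (X ×ˢ X)
          (fun q : (Fin n → ℝ) × (Fin n → ℝ) => PhiFun D A g r q.1 q.2 φ α))
    ∧ (∀ x ∈ X, ∀ y ∈ X,
        ConvexOn ℝ {q : D.F × ℝ | 0 < q.2}
          (fun q : D.F × ℝ => PhiFun D A g r x y (q.1 : Ω → ℝ) q.2))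
    ∧ PhiStarSI D A g X r = PhiStarIS D A g X r := by
  have hcont := continuousOn_PhiFun D hA g r
  have hconc := fun (φ : D.F) (α : ℝ) (hα : 0 < α) => concaveOn_PhiFun D hXcv hA g r φ hα
  have hconv := fun x hx y hy => convexOn_PhiFun D A g r (hA x hx) (hA y hy)
  refine ⟨hcont, fun φ hφ => hconc ⟨φ, hφ⟩, hconv, ?_⟩
  have hcont_xy (φ : D.F) (α : ℝ) (hα : 0 < α) : ContinuousOn
      (fun z : (Fin n → ℝ) × (Fin n → ℝ) => PhiFun D A g r z.1 z.2 φ α) (X ×ˢ X) :=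
    hcont.comp (f := fun z => (z, (φ, α))) (by fun_prop) fun z hz => ⟨hz, mem_univ _, hα⟩
  have hcont_φα (z : (Fin n → ℝ) × (Fin n → ℝ)) (hz : z ∈ X ×ˢ X) : ContinuousOn
      (fun q : D.F × ℝ => PhiFun D A g r z.1 z.2 q.1 q.2) {q : D.F × ℝ | 0 < q.2} :=
    hcont.comp (f := fun q => (z, q)) (by fun_prop) fun q hq => ⟨hz, mem_univ _, hq⟩
  obtain ⟨x₀, hx₀⟩ := hXne
  have hX2ne : (X ×ˢ X).Nonempty := ⟨(x₀, x₀), hx₀, hx₀⟩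
  have hX2cp : IsCompact (X ×ˢ X) := hXcp.prod hXcp
  have hbdd (φ : D.F) (α : ℝ) (hα : 0 < α) :
      BddAbove {w : ℝ | ∃ x ∈ X, ∃ y ∈ X, w = PhiFun D A g r x y φ α} := by
    refine (hX2cp.bddAbove_image (hcont_xy φ α hα)).mono ?_
    rintro _ ⟨x, hx, y, hy, rfl⟩
    exact ⟨(x, y), ⟨hx, hy⟩, rfl⟩
  set T : Set ℝ := {v : ℝ | ∃ φ ∈ D.F, ∃ α : ℝ, 0 < α ∧
    v = sSup {w : ℝ | ∃ x ∈ X, ∃ y ∈ X, w = PhiFun D A g r x y φ α}} with hT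
  set S : Set ℝ := {v : ℝ | ∃ x ∈ X, ∃ y ∈ X,
    v = sInf {w : ℝ | ∃ φ ∈ D.F, ∃ α : ℝ, 0 < α ∧ w = PhiFun D A g r x y φ α}} with hS
  suffices h : sSup S = sInf T by simp only [PhiStarSI, PhiStarIS, ← hT, ← hS, h]
  have hT_nonneg : ∀ v ∈ T, 0 ≤ v := by
    rintro _ ⟨φ, hφ, α, hα, rfl⟩
    exact (PhiFun_self_nonneg D A g hr (hA x₀ hx₀) ⟨φ, hφ⟩ hα).trans
      (le_csSup (hbdd ⟨φ, hφ⟩ α hα) ⟨x₀, hx₀, x₀, hx₀, rfl⟩)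
  have hTne : T.Nonempty := ⟨_, 0, D.F.zero_mem, 1, one_pos, rfl⟩
  have hTbdd : BddBelow T := ⟨0, hT_nonneg⟩
  have hS_le : ∀ v ∈ S, v ≤ sInf T := by
    rintro _ ⟨x, hx, y, hy, rfl⟩
    by_cases hb : BddBelow
        {w : ℝ | ∃ φ ∈ D.F, ∃ α : ℝ, 0 < α ∧ w = PhiFun D A g r x y φ α}
    · refine le_csInf hTne ?_
      rintro _ ⟨φ, hφ, α, hα, rfl⟩
      exact (csInf_le hb ⟨φ, hφ, α, hα, rfl⟩).trans
        (le_csSup (hbdd ⟨φ, hφ⟩ α hα) ⟨x, hx, y, hy, rfl⟩)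
    · rw [Real.sInf_of_not_bddBelow hb]
      exact le_csInf hTne hT_nonneg
  obtain ⟨⟨x, y⟩, ⟨hx, hy⟩, hxy⟩ := exists_forall_le_of_forall_exists_le
    (X := X ×ˢ X) (Y := {q : D.F × ℝ | 0 < q.2})
    (f := fun z q => PhiFun D A g r z.1 z.2 q.1 q.2) (V := sInf T)
    hX2ne hX2cp (hXcv.prod hXcv) (hconv x₀ hx₀ x₀ hx₀).1
    (fun q hq => hcont_xy q.1 q.2 hq) (fun q hq => hconc q.1 q.2 hq) hcont_φα
    (fun z hz => hconv z.1 hz.1 z.2 hz.2) (by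
      rintro ⟨φ, α⟩ hα
      obtain ⟨z, hz, hmax⟩ := hX2cp.exists_isMaxOn hX2ne (hcont_xy φ α hα)
      refine ⟨z, hz, (csInf_le hTbdd ⟨φ, φ.2, α, hα, rfl⟩).trans
        (csSup_le ⟨_, x₀, hx₀, x₀, hx₀, rfl⟩ ?_)⟩
      rintro _ ⟨x, hx, y, hy, rfl⟩
      exact hmax (show (x, y) ∈ X ×ˢ X from ⟨hx, hy⟩))
  refine le_antisymm (csSup_le ⟨_, x₀, hx₀, x₀, hx₀, rfl⟩ hS_le)
    (le_csSup_of_le ⟨sInf T, hS_le⟩ ⟨x, hx, y, hy, rfl⟩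
      (le_csInf ⟨_, 0, D.F.zero_mem, 1, one_pos, rfl⟩ ?_))
  rintro _ ⟨φ, hφ, α, hα, rfl⟩
  exact hxy (⟨φ, hφ⟩, α) hα
end

section
/- (Lemma 3.1) Let (D, F) be a good pair, X ⊆ ℝⁿ convex compact, A affine with A(X) ⊆ M, g ∈ ℝⁿ, and define 2Φ_*(r) = inf_{φ∈F, α>0} sup_{x,y∈X} Φ_r(x, y; φ, α). Then for every ε ∈ (0, 1), the minimax optimal ε-risk of affine estimates satisfies RiskA(ε) ≤ Φ_*(ln(2/ε)). -/
open MeasureTheory Real Matrix Set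
open scoped ENNReal

variable {Ω : Type*} [MeasurableSpace Ω] {P : Measure Ω}
  {E : Type*} [NormedAddCommGroup E] [NormedSpace ℝ E] {n : ℕ}

/-- Chernoff bound for the upper tail of `ψ ∈ F`. -/
lemma obsMeasure_lt_le (D : GoodPair Ω P E) {μ : E} (hμ : μ ∈ D.M) {ψ : Ω → ℝ} (hψ : ψ ∈ D.F)
    (t : ℝ) :
    obsMeasure D μ {ω | t < ψ ω} ≤
      ENNReal.ofReal (exp (log (∫ ω, exp (ψ ω) * D.p μ ω ∂P) - t)) := by
  have hms : MeasurableSet {ω | t < ψ ω} := measurableSet_lt measurable_const (D.F_meas ψ hψ)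
  have hint : Integrable (fun ω => exp (-t) * (exp (ψ ω) * D.p μ ω)) P :=
    (D.F_finite ψ hψ μ hμ).const_mul _
  have hnn : ∀ ω, 0 ≤ exp (-t) * (exp (ψ ω) * D.p μ ω) := fun ω => by
    have := D.p_pos μ hμ ω
    positivity
  have hI : 0 ≤ ∫ ω, exp (ψ ω) * D.p μ ω ∂P :=
    integral_nonneg fun ω => mul_nonneg (exp_pos _).le (D.p_pos μ hμ ω).le
  calc obsMeasure D μ {ω | t < ψ ω}
      = ∫⁻ ω in {ω | t < ψ ω}, ENNReal.ofReal (D.p μ ω) ∂P := withDensity_apply _ hms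
    _ ≤ ∫⁻ ω in {ω | t < ψ ω}, ENNReal.ofReal (exp (-t) * (exp (ψ ω) * D.p μ ω)) ∂P := by
        refine setLIntegral_mono' hms fun ω hω => ENNReal.ofReal_le_ofReal ?_
        rw [← mul_assoc, ← exp_add]
        refine le_mul_of_one_le_left (D.p_pos μ hμ ω).le (one_le_exp ?_)
        have : t < ψ ω := hω
        linarith
    _ ≤ ∫⁻ ω, ENNReal.ofReal (exp (-t) * (exp (ψ ω) * D.p μ ω)) ∂P := setLIntegral_le_lintegral _ _
    _ = ENNReal.ofReal (exp (-t) * ∫ ω, exp (ψ ω) * D.p μ ω ∂P) := by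
        rw [← ofReal_integral_eq_lintegral_ofReal hint (.of_forall hnn), integral_const_mul]
    _ ≤ _ := by
        refine ENNReal.ofReal_le_ofReal ?_
        rw [sub_eq_add_neg, exp_add, mul_comm]
        exact mul_le_mul_of_nonneg_right (le_exp_log _) (exp_pos _).le

lemma obsMeasure_univ (D : GoodPair Ω P E) {μ : E} (hμ : μ ∈ D.M) :
    obsMeasure D μ univ = 1 := by
  have hint : Integrable (D.p μ) P := by
    by_contra h
    simpa [integral_undef h] using D.p_prob μ hμ
  rw [obsMeasure, withDensity_apply _ MeasurableSet.univ, Measure.restrict_univ,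
    ← ofReal_integral_eq_lintegral_ofReal hint (.of_forall fun ω => (D.p_pos μ hμ ω).le),
    D.p_prob μ hμ, ENNReal.ofReal_one]

/-- Every level admissible in the definition of the `ε`-risk is nonnegative. -/
lemma nonneg_of_iSup_obsMeasure_lt (D : GoodPair Ω P E) (A : (Fin n → ℝ) →ᵃ[ℝ] E)
    (g : Fin n → ℝ) {X : Set (Fin n → ℝ)} (hX : X.Nonempty) (hA : ∀ x ∈ X, A x ∈ D.M)
    (ghat : Ω → ℝ) {ε : ℝ} (hε : ε ≤ 1) {δ : ℝ}
    (hδ : (⨆ x ∈ X, obsMeasure D (A x) {ω | δ < |ghat ω - g ⬝ᵥ x|}) < ENNReal.ofReal ε) :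
    0 ≤ δ := by
  by_contra! hneg
  obtain ⟨x, hx⟩ := hX
  have huniv : {ω | δ < |ghat ω - g ⬝ᵥ x|} = univ :=
    eq_univ_of_forall fun ω => hneg.trans_le (abs_nonneg _)
  have hle := (le_iSup₂ (f := fun x (_ : x ∈ X) =>
    obsMeasure D (A x) {ω | δ < |ghat ω - g ⬝ᵥ x|}) x hx).trans_lt hδ
  rw [huniv, obsMeasure_univ D (hA x hx)] at hle
  exact hle.not_ge (ENNReal.ofReal_le_one.2 hε)

/-- The risk of an affine estimate is bounded once its one-sided exponential moments are. -/
lemma risk_le_of_log_integral_le (D : GoodPair Ω P E) (A : (Fin n → ℝ) →ᵃ[ℝ] E)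
    (g : Fin n → ℝ) {X : Set (Fin n → ℝ)} (hX : X.Nonempty) (hA : ∀ x ∈ X, A x ∈ D.M)
    {ε : ℝ} (hε : ε ∈ Ioo (0 : ℝ) 1) {φ : Ω → ℝ} (hφ : φ ∈ D.F) {α : ℝ} (hα : 0 < α)
    {c ρ : ℝ}
    (hup : ∀ x ∈ X, -(g ⬝ᵥ x) + α * log (∫ ω, exp (φ ω / α) * D.p (A x) ω ∂P)
      + c + α * log (2 / ε) ≤ ρ)
    (hlow : ∀ x ∈ X, g ⬝ᵥ x + α * log (∫ ω, exp (-φ ω / α) * D.p (A x) ω ∂P)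
      - c + α * log (2 / ε) ≤ ρ) :
    Risk D A g X (fun ω => φ ω + c) ε ≤ ρ := by
  have hε0 := hε.1
  have hmem : (fun ω => φ ω / α) ∈ D.F := by
    simpa [Pi.smul_def, div_eq_inv_mul] using D.F.smul_mem α⁻¹ hφ
  have hmem' : (fun ω => -φ ω / α) ∈ D.F := by
    simpa [Pi.neg_def, neg_div] using D.F.neg_mem hmem
  refine le_of_forall_gt_imp_ge_of_dense fun δ hδ => csInf_le
    ⟨0, fun δ' hδ' => nonneg_of_iSup_obsMeasure_lt D A g hX hA _ hε.2.le hδ'⟩ ?_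
  have hfac : exp ((ρ - δ) / α) < 1 := exp_lt_one_iff.2 (div_neg_of_neg_of_pos (by linarith) hα)
  have htail : ∀ {u t : ℝ}, α * u - α * t + α * log (2 / ε) ≤ ρ - δ →
      exp (u - t) ≤ ε / 2 * exp ((ρ - δ) / α) := by
    intro u t h
    have hexp : ε / 2 = exp (-log (2 / ε)) := by
      rw [← log_inv, inv_div, exp_log (by positivity)]
    rw [hexp, ← exp_add, exp_le_exp, ← sub_le_iff_le_add', le_div_iff₀ hα]
    linarith
  refine lt_of_le_of_lt (iSup₂_le fun x hx => ?_)
    ((ENNReal.ofReal_lt_ofReal_iff hε0).2 (show ε * exp ((ρ - δ) / α) < ε by nlinarith))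
  have hsub : {ω | δ < |φ ω + c - g ⬝ᵥ x|} ⊆
      {ω | (g ⬝ᵥ x - c + δ) / α < φ ω / α} ∪ {ω | (c - g ⬝ᵥ x + δ) / α < -φ ω / α} := by
    intro ω hω
    rcases lt_abs.1 (show δ < |φ ω + c - g ⬝ᵥ x| from hω) with h | h
    · exact Or.inl (div_lt_div_of_pos_right (by linarith) hα)
    · exact Or.inr (div_lt_div_of_pos_right (by linarith) hα)
  have h1 := hup x hx
  have h2 := hlow x hx
  calc obsMeasure D (A x) {ω | δ < |φ ω + c - g ⬝ᵥ x|}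
      ≤ _ := (measure_mono hsub).trans (measure_union_le _ _)
    _ ≤ ENNReal.ofReal (ε / 2 * exp ((ρ - δ) / α))
          + ENNReal.ofReal (ε / 2 * exp ((ρ - δ) / α)) := by
        refine add_le_add
          ((obsMeasure_lt_le D (hA x hx) hmem _).trans (ENNReal.ofReal_le_ofReal (htail ?_)))
          ((obsMeasure_lt_le D (hA x hx) hmem' _).trans (ENNReal.ofReal_le_ofReal (htail ?_)))
        · rw [mul_div_cancel₀ _ hα.ne']
          linarith
        · rw [mul_div_cancel₀ _ hα.ne']
          linarith
    _ = ENNReal.ofReal (ε * exp ((ρ - δ) / α)) := by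
        rw [← ENNReal.ofReal_add (by positivity) (by positivity)]
        congr 1
        ring

/-- On a compact set of parameters, the log-moment functional of `ψ ∈ F` composed with an affine
map, scaled and shifted by a linear form, is bounded above. -/
lemma bddAbove_image_dotProduct_add_log [FiniteDimensional ℝ E] (D : GoodPair Ω P E)
    (A : (Fin n → ℝ) →ᵃ[ℝ] E) (g : Fin n → ℝ) {X : Set (Fin n → ℝ)} (hX : IsCompact X)
    (hA : ∀ x ∈ X, A x ∈ D.M) {ψ : Ω → ℝ} (hψ : ψ ∈ D.F) (α : ℝ) :
    BddAbove ((fun x => g ⬝ᵥ x + α * log (∫ ω, exp (ψ ω) * D.p (A x) ω ∂P)) '' X) := by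
  have hlog : ContinuousOn (fun μ => log (∫ ω, exp (ψ ω) * D.p μ ω ∂P)) D.M :=
    (D.F_concave ψ hψ).continuousOn D.M_open
  have hlin : Continuous fun x : Fin n → ℝ => g ⬝ᵥ x := continuous_const.dotProduct continuous_id
  exact (hX.image_of_continuousOn (hlin.continuousOn.add (continuousOn_const.mul
    (hlog.comp A.continuous_of_finiteDimensional.continuousOn hA)))).bddAbove

/-- The affine `ε`-risk is at most half of the worst-case value of `Φ` at any `φ ∈ F`, `α > 0`. -/
lemma riskAff_le_half_sSup [FiniteDimensional ℝ E] (D : GoodPair Ω P E)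
    (A : (Fin n → ℝ) →ᵃ[ℝ] E) (g : Fin n → ℝ) {X : Set (Fin n → ℝ)} (hXne : X.Nonempty)
    (hX : IsCompact X) (hA : ∀ x ∈ X, A x ∈ D.M) {ε : ℝ} (hε : ε ∈ Ioo (0 : ℝ) 1)
    {φ : Ω → ℝ} (hφ : φ ∈ D.F) {α : ℝ} (hα : 0 < α) :
    RiskAff D A g X ε ≤
      1 / 2 * sSup {w : ℝ | ∃ x ∈ X, ∃ y ∈ X, w = PhiFun D A g (log (2 / ε)) x y φ α} := by
  have hmem : (fun ω => φ ω / α) ∈ D.F := by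
    simpa [Pi.smul_def, div_eq_inv_mul] using D.F.smul_mem α⁻¹ hφ
  have hmem' : (fun ω => -φ ω / α) ∈ D.F := by
    simpa [Pi.neg_def, neg_div] using D.F.neg_mem hmem
  set a : (Fin n → ℝ) → ℝ :=
    fun x => g ⬝ᵥ x + α * log (∫ ω, exp (-φ ω / α) * D.p (A x) ω ∂P) with ha
  set b : (Fin n → ℝ) → ℝ :=
    fun y => (-g) ⬝ᵥ y + α * log (∫ ω, exp (φ ω / α) * D.p (A y) ω ∂P) with hb
  have hBa : BddAbove (a '' X) := bddAbove_image_dotProduct_add_log D A g hX hA hmem' α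
  have hBb : BddAbove (b '' X) := bddAbove_image_dotProduct_add_log D A (-g) hX hA hmem α
  have hPhi : ∀ x y, PhiFun D A g (log (2 / ε)) x y φ α = a x + b y + 2 * α * log (2 / ε) := by
    intro x y
    simp only [PhiFun, ha, hb, neg_dotProduct]
    ring
  set S := {w : ℝ | ∃ x ∈ X, ∃ y ∈ X, w = PhiFun D A g (log (2 / ε)) x y φ α}
  set U := sSup (a '' X)
  set V := sSup (b '' X)
  have hU : ∀ x ∈ X, a x ≤ U := fun x hx => le_csSup hBa (mem_image_of_mem a hx)
  have hV : ∀ x ∈ X, b x ≤ V := fun x hx => le_csSup hBb (mem_image_of_mem b hx)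
  have hS : BddAbove S := by
    refine ⟨U + V + 2 * α * log (2 / ε), ?_⟩
    rintro _ ⟨x, hx, y, hy, rfl⟩
    rw [hPhi]
    linarith [hU x hx, hV y hy]
  have hUV : U + V + 2 * α * log (2 / ε) ≤ sSup S := by
    have hU' : U ≤ sSup S - 2 * α * log (2 / ε) - V := by
      refine csSup_le (hXne.image a) (forall_mem_image.2 fun x hx => ?_)
      suffices V ≤ sSup S - 2 * α * log (2 / ε) - a x by linarith
      refine csSup_le (hXne.image b) (forall_mem_image.2 fun y hy => ?_)
      have := le_csSup hS ⟨x, hx, y, hy, rfl⟩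
      rw [hPhi] at this
      linarith
    linarith
  have hmemc : (fun ω => φ ω + (U - V) / 2) ∈ D.F := D.F.add_mem hφ (D.F_const _)
  have hbdd : BddBelow {ρ : ℝ | ∃ φ ∈ D.F, ρ = Risk D A g X φ ε} := by
    refine ⟨0, ?_⟩
    rintro _ ⟨φ', -, rfl⟩
    exact Real.sInf_nonneg fun δ hδ => nonneg_of_iSup_obsMeasure_lt D A g hXne hA _ hε.2.le hδ
  refine (csInf_le hbdd ⟨_, hmemc, rfl⟩).trans
    (risk_le_of_log_integral_le D A g hXne hA hε hφ hα (fun x hx => ?_) fun x hx => ?_)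
  · have := hV x hx
    simp only [hb, neg_dotProduct] at this
    linarith
  · have := hU x hx
    simp only [ha] at this
    linarith

/-- **Lemma 3.1.** For every `ε ∈ (0,1)`, the minimax optimal `ε`-risk of affine
estimates satisfies `RiskA(ε) ≤ Φ_*(ln(2/ε))`, where
`2Φ_*(r) = inf_{φ∈F, α>0} sup_{x,y∈X} Φ_r(x,y;φ,α)`. -/
theorem riskAff_le_phiStar
    {Ω : Type*} [MeasurableSpace Ω] [TopologicalSpace Ω] [PolishSpace Ω] [BorelSpace Ω]
    {P : Measure Ω} [SigmaFinite P] {m n : ℕ}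
    (D : GoodPair Ω P (Fin m → ℝ))
    (X : Set (Fin n → ℝ)) (hXne : X.Nonempty) (hXcp : IsCompact X) (hXcv : Convex ℝ X)
    (A : (Fin n → ℝ) →ᵃ[ℝ] (Fin m → ℝ)) (hA : ∀ x ∈ X, A x ∈ D.M)
    (g : Fin n → ℝ) (ε : ℝ) (hε : ε ∈ Set.Ioo (0 : ℝ) 1) :
    RiskAff D A g X ε ≤ PhiStarIS D A g X (Real.log (2 / ε)) := by
  have hne : {v : ℝ | ∃ φ ∈ D.F, ∃ α : ℝ, 0 < α ∧ v = sSup {w : ℝ | ∃ x ∈ X, ∃ y ∈ X,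
      w = PhiFun D A g (Real.log (2 / ε)) x y φ α}}.Nonempty :=
    ⟨_, 0, D.F.zero_mem, 1, one_pos, rfl⟩
  have hle : 2 * RiskAff D A g X ε ≤ 2 * PhiStarIS D A g X (Real.log (2 / ε)) := by
    rw [PhiStarIS, ← mul_assoc, mul_one_div_cancel two_ne_zero, one_mul]
    refine le_csInf hne ?_
    rintro _ ⟨φ, hφ, α, hα, rfl⟩
    linarith [riskAff_le_half_sSup D A g hXne hXcp hA hε hφ hα]
  linarith
end

section
/- Let (Ω, P) be a measurable space with σ-finite measure P, and let p, q : Ω → ℝ be Borel probability densities with respect to P which are strictly positive everywhere. Then for every Borel function φ : Ω → ℝ such that the integrals ∫_Ω e^{−φ} p dP and ∫_Ω e^{φ} q dP are finite, one has ln(∫_Ω e^{−φ(ω)} p(ω) P(dω)) + ln(∫_Ω e^{φ(ω)} q(ω) P(dω)) ≥ 2·ln(∫_Ω √(p(ω)q(ω)) P(dω)), with equality when φ = (1/2)·ln(p/q). -/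
open MeasureTheory Real

/-- The geometric mean of two nonnegative integrable functions is integrable. -/
lemma integrable_sqrt_mul {α : Type*} [MeasurableSpace α] {μ : Measure α} {f g : α → ℝ}
    (hf0 : ∀ x, 0 ≤ f x) (hg0 : ∀ x, 0 ≤ g x) (hf : Integrable f μ) (hg : Integrable g μ) :
    Integrable (fun x => √(f x * g x)) μ := by
  refine (hf.add hg).mono'
    (continuous_sqrt.comp_aestronglyMeasurable (hf.1.mul hg.1)) (.of_forall fun x => ?_)
  rw [norm_of_nonneg (sqrt_nonneg _), Pi.add_apply]
  refine sqrt_le_iff.2 ⟨add_nonneg (hf0 x) (hg0 x), ?_⟩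
  nlinarith [mul_nonneg (hf0 x) (hg0 x), sq_nonneg (f x), sq_nonneg (g x)]

/-- The Cauchy–Schwarz inequality for the geometric mean of two nonnegative functions. -/
lemma integral_sqrt_mul_le {α : Type*} [MeasurableSpace α] {μ : Measure α} {f g : α → ℝ}
    (hf0 : ∀ x, 0 ≤ f x) (hg0 : ∀ x, 0 ≤ g x) (hf : Integrable f μ) (hg : Integrable g μ) :
    ∫ x, √(f x * g x) ∂μ ≤ √(∫ x, f x ∂μ) * √(∫ x, g x ∂μ) := by
  have memLp_sqrt {h : α → ℝ} (h0 : ∀ x, 0 ≤ h x) (hh : Integrable h μ) :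
      MemLp (fun x => √(h x)) (ENNReal.ofReal 2) μ := by
    rw [ENNReal.ofReal_ofNat,
      memLp_two_iff_integrable_sq (continuous_sqrt.comp_aestronglyMeasurable hh.1)]
    simpa only [sq_sqrt (h0 _)] using hh
  have key := integral_mul_le_Lp_mul_Lq_of_nonneg HolderConjugate.two_two
    (.of_forall fun x => sqrt_nonneg (f x)) (.of_forall fun x => sqrt_nonneg (g x))
    (memLp_sqrt hf0 hf) (memLp_sqrt hg0 hg)
  simpa only [rpow_two, sq_sqrt (hf0 _), sq_sqrt (hg0 _), ← sqrt_eq_rpow,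
    ← sqrt_mul (hf0 _)] using key

/-- The integral of a positive integrable function against a nonzero measure is positive. -/
lemma integral_pos_of_forall_pos {α : Type*} [MeasurableSpace α] {μ : Measure α} [NeZero μ]
    {f : α → ℝ} (hf0 : ∀ x, 0 < f x) (hf : Integrable f μ) : 0 < ∫ x, f x ∂μ := by
  rw [integral_pos_iff_support_of_nonneg (fun x => (hf0 x).le) hf,
    Function.support_eq_univ fun x => (hf0 x).ne']
  exact NeZero.pos _

lemma exp_half_log_div_mul {a b : ℝ} (ha : 0 < a) (hb : 0 < b) :
    exp (1 / 2 * log (a / b)) * b = √(a * b) := by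
  rw [eq_comm, sqrt_eq_iff_mul_self_eq (by positivity) (by positivity),
    mul_mul_mul_comm, ← exp_add, ← add_mul, add_halves, one_mul, exp_log (by positivity)]
  field_simp

/-- For strictly positive probability densities `p, q` w.r.t. a σ-finite measure `P`,
and any Borel `φ` with `∫ e^{−φ} p dP` and `∫ e^{φ} q dP` finite, one has
`ln ∫ e^{−φ} p dP + ln ∫ e^{φ} q dP ≥ 2 ln ∫ √(pq) dP`, with equality for
`φ = (1/2) ln(p/q)`. -/
theorem log_mgf_sum_ge_twice_log_hellinger
    {Ω : Type*} [MeasurableSpace Ω] (P : Measure Ω) [SigmaFinite P]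
    (p q : Ω → ℝ) (hpm : Measurable p) (hqm : Measurable q)
    (hp : ∀ ω, 0 < p ω) (hq : ∀ ω, 0 < q ω)
    (hp1 : ∫ ω, p ω ∂P = 1) (hq1 : ∫ ω, q ω ∂P = 1) :
    (∀ φ : Ω → ℝ, Measurable φ →
      Integrable (fun ω => Real.exp (-φ ω) * p ω) P →
      Integrable (fun ω => Real.exp (φ ω) * q ω) P →
      2 * Real.log (∫ ω, Real.sqrt (p ω * q ω) ∂P) ≤
        Real.log (∫ ω, Real.exp (-φ ω) * p ω ∂P)
          + Real.log (∫ ω, Real.exp (φ ω) * q ω ∂P))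
    ∧ Real.log (∫ ω, Real.exp (-((1/2) * Real.log (p ω / q ω))) * p ω ∂P)
        + Real.log (∫ ω, Real.exp ((1/2) * Real.log (p ω / q ω)) * q ω ∂P)
      = 2 * Real.log (∫ ω, Real.sqrt (p ω * q ω) ∂P) := by
  constructor
  · intro φ _ hφp hφq
    have : NeZero P := ⟨by rintro rfl; simp at hp1⟩
    have hP (ω : Ω) : 0 < exp (-φ ω) * p ω := mul_pos (exp_pos _) (hp ω)
    have hQ (ω : Ω) : 0 < exp (φ ω) * q ω := mul_pos (exp_pos _) (hq ω)
    have hmul (ω : Ω) : exp (-φ ω) * p ω * (exp (φ ω) * q ω) = p ω * q ω := by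
      rw [mul_mul_mul_comm, ← exp_add, neg_add_cancel, exp_zero, one_mul]
    have hint := integrable_sqrt_mul (fun ω => (hP ω).le) (fun ω => (hQ ω).le) hφp hφq
    have hle := integral_sqrt_mul_le (fun ω => (hP ω).le) (fun ω => (hQ ω).le) hφp hφq
    simp only [hmul] at hint hle
    have hH := integral_pos_of_forall_pos (fun ω => sqrt_pos.2 (mul_pos (hp ω) (hq ω))) hint
    have hA := integral_pos_of_forall_pos hP hφp
    have hB := integral_pos_of_forall_pos hQ hφq
    have hlog := log_le_log hH hle
    rw [log_mul (sqrt_pos.2 hA).ne' (sqrt_pos.2 hB).ne', log_sqrt hA.le, log_sqrt hB.le] at hlog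
    linarith
  · have hneg (ω : Ω) : exp (-(1 / 2 * log (p ω / q ω))) * p ω = √(p ω * q ω) := by
      rw [← mul_neg, ← log_inv, inv_div, exp_half_log_div_mul (hq ω) (hp ω), mul_comm]
    simp only [hneg, exp_half_log_div_mul (hp _) (hq _), two_mul]
end

section
/- In the Gaussian observation model ω = Ax + ξ with ξ ∼ N(0, I_L), where X ⊆ ℝⁿ is convex compact, A is an L×n matrix, and g ∈ ℝⁿ, the saddle-point value Φ_* admits the explicit form: for every r > 0, 2Φ_*(r) = max{ gᵀx − gᵀy : x, y ∈ X, ‖A(x − y)‖₂ ≤ 2√(2r) }. Equivalently, for fixed x, y ∈ X, inf_{φ∈ℝ^L, α>0} [gᵀx − gᵀy + φᵀA(y − x) + φᵀφ/α + 2αr] equals gᵀx − gᵀy if ‖A(x − y)‖₂ ≤ 2√(2r) and equals −∞ otherwise. -/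
open MeasureTheory Real Matrix Set Filter
open scoped ENNReal Topology

/-- The standard Gaussian `N(0, I_L)` density on `ℝ^L`. -/
noncomputable def stdGaussDensity {L : ℕ} (ω : Fin L → ℝ) : ℝ :=
  (2 * Real.pi) ^ (-(L : ℝ) / 2) * Real.exp (-(∑ i, ω i ^ 2) / 2)

/-- The distribution `N(Ax, I_L)` of the observation `ω = Ax + ξ`, `ξ ∼ N(0, I_L)`. -/
noncomputable def gaussObs {L n : ℕ} (A : Matrix (Fin L) (Fin n) ℝ) (x : Fin n → ℝ) :
    Measure (Fin L → ℝ) :=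
  volume.withDensity fun ω => ENNReal.ofReal (stdGaussDensity (ω - A.mulVec x))

/-- The Euclidean norm `‖v‖₂` on `ℝ^L`. -/
noncomputable def euclNorm {L : ℕ} (v : Fin L → ℝ) : ℝ :=
  Real.sqrt (∑ i, v i ^ 2)

/-- The `ε`-risk of an estimate `ghat` in the Gaussian observation model. -/
noncomputable def gaussRisk {L n : ℕ} (A : Matrix (Fin L) (Fin n) ℝ)
    (g : Fin n → ℝ) (X : Set (Fin n → ℝ)) (ghat : (Fin L → ℝ) → ℝ) (ε : ℝ) : ℝ :=
  sInf {δ : ℝ |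
    (⨆ x ∈ X, gaussObs A x {ω | δ < |ghat ω - g ⬝ᵥ x|}) < ENNReal.ofReal ε}

/-- The minimax optimal `ε`-risk over all Borel estimates in the Gaussian model. -/
noncomputable def gaussRiskStar {L n : ℕ} (A : Matrix (Fin L) (Fin n) ℝ)
    (g : Fin n → ℝ) (X : Set (Fin n → ℝ)) (ε : ℝ) : ℝ :=
  sInf {ρ : ℝ | ∃ ghat : (Fin L → ℝ) → ℝ, Measurable ghat ∧
    ρ = gaussRisk A g X ghat ε}

/-- The function `Φ_r(x, y; φ, α)` of the Gaussian model (with linear `φ`). -/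
noncomputable def gaussPhi {L n : ℕ} (A : Matrix (Fin L) (Fin n) ℝ) (g : Fin n → ℝ)
    (r : ℝ) (x y : Fin n → ℝ) (φ : Fin L → ℝ) (α : ℝ) : ℝ :=
  g ⬝ᵥ x - g ⬝ᵥ y
    + α * Real.log (∫ ω : Fin L → ℝ,
        Real.exp (-(φ ⬝ᵥ ω) / α) * stdGaussDensity (ω - A.mulVec x))
    + α * Real.log (∫ ω : Fin L → ℝ,
        Real.exp ((φ ⬝ᵥ ω) / α) * stdGaussDensity (ω - A.mulVec y))
    + 2 * α * r

/-- `Φ_*(r)`: `2Φ_*(r) = sup_{x,y∈X} inf_{φ∈ℝ^L, α>0} Φ_r(x,y;φ,α)`. -/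
noncomputable def gaussPhiStar {L n : ℕ} (A : Matrix (Fin L) (Fin n) ℝ)
    (g : Fin n → ℝ) (X : Set (Fin n → ℝ)) (r : ℝ) : ℝ :=
  (1/2) * sSup {v : ℝ | ∃ x ∈ X, ∃ y ∈ X,
    v = sInf {w : ℝ | ∃ φ : Fin L → ℝ, ∃ α : ℝ, 0 < α ∧
      w = gaussPhi A g r x y φ α}}

/-- The standard Gaussian upper tail probability `y = (1/√(2π)) ∫_x^∞ e^{−t²/2} dt`. -/
noncomputable def gaussTail (x : ℝ) : ℝ :=
  (Real.sqrt (2 * Real.pi))⁻¹ * ∫ t in Set.Ioi x, Real.exp (-t ^ 2 / 2)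

/-- The inverse error function `ErfInv`: for `y ∈ (0, 1/2)`, `ErfInv y` is the
unique `x` with `gaussTail x = y` (realized here as an infimum). -/
noncomputable def erfInv (y : ℝ) : ℝ :=
  sInf {x : ℝ | gaussTail x ≤ y}

/-- The moment generating function of `N(a, I_L)`. -/
theorem integral_exp_dotProduct_mul_stdGaussDensity {L : ℕ} (ψ a : Fin L → ℝ) :
    ∫ ω : Fin L → ℝ, Real.exp (ψ ⬝ᵥ ω) * stdGaussDensity (ω - a)
      = Real.exp (ψ ⬝ᵥ a + ψ ⬝ᵥ ψ / 2) := by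
  have h_fun : ∀ ω : Fin L → ℝ, Real.exp (ψ ⬝ᵥ ω) * stdGaussDensity (ω - a)
      = ∏ i, ProbabilityTheory.gaussianPDFReal (a i) 1 (ω i) * Real.exp (ψ i * ω i) := by
    intro ω
    have hπ : (0 : ℝ) ≤ 2 * Real.pi := by positivity
    have h_const : (2 * Real.pi) ^ (-(L : ℝ) / 2) = (√(2 * Real.pi))⁻¹ ^ L := by
      rw [Real.sqrt_eq_rpow, ← Real.rpow_neg hπ, ← Real.rpow_natCast, ← Real.rpow_mul hπ]
      congr 1
      ring
    simp only [stdGaussDensity, ProbabilityTheory.gaussianPDFReal, Finset.prod_mul_distrib,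
      ← Real.exp_sum, dotProduct, h_const, NNReal.coe_one, mul_one, Finset.prod_const,
      Finset.card_univ, Fintype.card_fin, Pi.sub_apply, ← Finset.sum_div,
      Finset.sum_neg_distrib]
    ring
  have h_coord : ∀ i, ∫ t : ℝ, ProbabilityTheory.gaussianPDFReal (a i) 1 t * Real.exp (ψ i * t)
      = Real.exp (ψ i * a i + ψ i * ψ i / 2) := by
    intro i
    have h := congrFun (ProbabilityTheory.mgf_id_gaussianReal (μ := a i) (v := 1)) (ψ i)
    simp only [ProbabilityTheory.mgf, id,
      ProbabilityTheory.integral_gaussianReal_eq_integral_smul one_ne_zero, smul_eq_mul] at h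
    rw [h, NNReal.coe_one]
    congr 1
    ring
  simp_rw [h_fun]
  rw [integral_fintype_prod_volume_eq_prod (fun i t =>
    ProbabilityTheory.gaussianPDFReal (a i) 1 t * Real.exp (ψ i * t))]
  simp_rw [h_coord, ← Real.exp_sum, dotProduct, Finset.sum_add_distrib, Finset.sum_div]

theorem gaussPhi_eq {L n : ℕ} (A : Matrix (Fin L) (Fin n) ℝ) (g : Fin n → ℝ)
    (r : ℝ) (x y : Fin n → ℝ) (φ : Fin L → ℝ) {α : ℝ} (hα : 0 < α) :
    gaussPhi A g r x y φ α
      = g ⬝ᵥ x - g ⬝ᵥ y + φ ⬝ᵥ A.mulVec (y - x) + (φ ⬝ᵥ φ) / α + 2 * α * r := by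
  have h_neg : ∀ ω : Fin L → ℝ, -(φ ⬝ᵥ ω) / α = ((-α⁻¹) • φ) ⬝ᵥ ω := fun ω => by
    rw [smul_dotProduct, smul_eq_mul]
    ring
  have h_pos : ∀ ω : Fin L → ℝ, (φ ⬝ᵥ ω) / α = (α⁻¹ • φ) ⬝ᵥ ω := fun ω => by
    rw [smul_dotProduct, smul_eq_mul]
    ring
  unfold gaussPhi
  simp_rw [h_neg, h_pos, integral_exp_dotProduct_mul_stdGaussDensity, Real.log_exp,
    mulVec_sub, dotProduct_sub, smul_dotProduct, dotProduct_smul, smul_eq_mul]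
  field_simp
  ring

theorem euclNorm_le_two_mul_sqrt_iff {L : ℕ} (v : Fin L → ℝ) {r : ℝ} (hr : 0 < r) :
    euclNorm v ≤ 2 * Real.sqrt (2 * r) ↔ v ⬝ᵥ v ≤ 8 * r := by
  have h_two : 2 * Real.sqrt (2 * r) = Real.sqrt (8 * r) := by
    rw [show 8 * r = 2 ^ 2 * (2 * r) by ring, Real.sqrt_mul (by norm_num) (2 * r),
      Real.sqrt_sq (by norm_num)]
  rw [h_two, euclNorm, Real.sqrt_le_sqrt_iff (by positivity)]
  simp only [dotProduct, sq]

/-- Completing the square in `φ`. -/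
theorem dotProduct_add_dotProduct_div_add_nonneg {L : ℕ} (φ d : Fin L → ℝ) {α r : ℝ}
    (hα : 0 < α) (hd : d ⬝ᵥ d ≤ 8 * r) :
    0 ≤ φ ⬝ᵥ d + (φ ⬝ᵥ φ) / α + 2 * α * r := by
  have h_sq : 0 ≤ (φ + (α / 2) • d) ⬝ᵥ (φ + (α / 2) • d) / α :=
    div_nonneg (Finset.sum_nonneg fun _ _ => mul_self_nonneg _) hα.le
  have h_expand : (φ + (α / 2) • d) ⬝ᵥ (φ + (α / 2) • d) / α
      = φ ⬝ᵥ d + (φ ⬝ᵥ φ) / α + α * (d ⬝ᵥ d) / 4 := by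
    simp only [add_dotProduct, dotProduct_add, smul_dotProduct, dotProduct_smul, smul_eq_mul,
      dotProduct_comm d φ]
    field_simp
    ring
  nlinarith [mul_le_mul_of_nonneg_left hd hα.le]

theorem sInf_affine_dual_eq {L : ℕ} (c : ℝ) (d : Fin L → ℝ) {r : ℝ} (hr : 0 < r)
    (hd : d ⬝ᵥ d ≤ 8 * r) :
    sInf {w : ℝ | ∃ φ : Fin L → ℝ, ∃ α : ℝ, 0 < α ∧
      w = c + φ ⬝ᵥ d + (φ ⬝ᵥ φ) / α + 2 * α * r} = c := by
  refine csInf_eq_of_forall_ge_of_forall_gt_exists_lt ⟨_, 0, 1, one_pos, rfl⟩ ?_ ?_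
  · rintro w ⟨φ, α, hα, rfl⟩
    linarith [dotProduct_add_dotProduct_div_add_nonneg φ d hα hd]
  · intro w hw
    refine ⟨_, ⟨0, (w - c) / (4 * r), div_pos (sub_pos.2 hw) (by positivity), rfl⟩, ?_⟩
    have h_val : 2 * ((w - c) / (4 * r)) * r = (w - c) / 2 := by
      field_simp
      ring
    simp only [zero_dotProduct, zero_div, add_zero, h_val]
    linarith

theorem not_bddBelow_affine_dual {L : ℕ} (c : ℝ) (d : Fin L → ℝ) {r : ℝ}
    (hd : 8 * r < d ⬝ᵥ d) :
    ¬ BddBelow {w : ℝ | ∃ φ : Fin L → ℝ, ∃ α : ℝ, 0 < α ∧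
      w = c + φ ⬝ᵥ d + (φ ⬝ᵥ φ) / α + 2 * α * r} := by
  rintro ⟨b, hb⟩
  obtain ⟨k, hk⟩ : ∃ k, k = d ⬝ᵥ d - 8 * r := ⟨_, rfl⟩
  have hk_pos : 0 < k := by linarith
  have hα : 0 < 4 * (|c - b| + 1) / k := by positivity
  have h := hb ⟨(-(4 * (|c - b| + 1) / k / 2)) • d, _, hα, rfl⟩
  obtain ⟨α, h_def⟩ : ∃ α, α = 4 * (|c - b| + 1) / k := ⟨_, rfl⟩
  rw [← h_def] at h hα
  have h_mul : α * k = 4 * (|c - b| + 1) := by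
    rw [h_def]
    field_simp
  have h_val : c + (-(α / 2)) • d ⬝ᵥ d + ((-(α / 2)) • d ⬝ᵥ (-(α / 2)) • d) / α + 2 * α * r
      = c - α * k / 4 := by
    simp only [smul_dotProduct, dotProduct_smul, smul_eq_mul, hk]
    field_simp
    ring
  rw [h_val, h_mul] at h
  linarith [le_abs_self (c - b)]

/-- In the Gaussian observation model, for every `r > 0` the saddle-point value
admits the explicit form `2Φ_*(r) = max{gᵀx − gᵀy : x, y ∈ X, ‖A(x−y)‖₂ ≤ 2√(2r)}`;
equivalently, for fixed `x, y ∈ X`,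
`inf_{φ∈ℝ^L, α>0} [gᵀx − gᵀy + φᵀA(y−x) + φᵀφ/α + 2αr]` equals `gᵀx − gᵀy` when
`‖A(x−y)‖₂ ≤ 2√(2r)` and `−∞` (the set is unbounded below) otherwise. -/
theorem gauss_phiStar_explicit {L n : ℕ} (A : Matrix (Fin L) (Fin n) ℝ)
    (g : Fin n → ℝ) (X : Set (Fin n → ℝ))
    (hXne : X.Nonempty) (hXcp : IsCompact X) (hXcv : Convex ℝ X)
    (r : ℝ) (hr : 0 < r) :
    IsGreatest
      {v : ℝ | ∃ x ∈ X, ∃ y ∈ X,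
        euclNorm (A.mulVec (x - y)) ≤ 2 * Real.sqrt (2 * r) ∧ v = g ⬝ᵥ x - g ⬝ᵥ y}
      (2 * gaussPhiStar A g X r)
    ∧ ∀ x ∈ X, ∀ y ∈ X,
        (euclNorm (A.mulVec (x - y)) ≤ 2 * Real.sqrt (2 * r) →
          sInf {w : ℝ | ∃ φ : Fin L → ℝ, ∃ α : ℝ, 0 < α ∧
              w = g ⬝ᵥ x - g ⬝ᵥ y + φ ⬝ᵥ A.mulVec (y - x) + (φ ⬝ᵥ φ) / α + 2 * α * r}
            = g ⬝ᵥ x - g ⬝ᵥ y)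
        ∧ (2 * Real.sqrt (2 * r) < euclNorm (A.mulVec (x - y)) →
            ¬ BddBelow {w : ℝ | ∃ φ : Fin L → ℝ, ∃ α : ℝ, 0 < α ∧
              w = g ⬝ᵥ x - g ⬝ᵥ y + φ ⬝ᵥ A.mulVec (y - x) + (φ ⬝ᵥ φ) / α + 2 * α * r}) := by
  have h_iff : ∀ x y : Fin n → ℝ, euclNorm (A.mulVec (x - y)) ≤ 2 * Real.sqrt (2 * r) ↔
      A.mulVec (y - x) ⬝ᵥ A.mulVec (y - x) ≤ 8 * r := fun x y => by
    rw [euclNorm_le_two_mul_sqrt_iff _ hr, ← neg_sub y x, mulVec_neg, neg_dotProduct_neg]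
  have h_feas : ∀ x y : Fin n → ℝ, euclNorm (A.mulVec (x - y)) ≤ 2 * Real.sqrt (2 * r) →
      sInf {w : ℝ | ∃ φ : Fin L → ℝ, ∃ α : ℝ, 0 < α ∧
        w = g ⬝ᵥ x - g ⬝ᵥ y + φ ⬝ᵥ A.mulVec (y - x) + (φ ⬝ᵥ φ) / α + 2 * α * r}
      = g ⬝ᵥ x - g ⬝ᵥ y := fun x y h => sInf_affine_dual_eq _ _ hr ((h_iff x y).1 h)
  have h_infeas : ∀ x y : Fin n → ℝ, 2 * Real.sqrt (2 * r) < euclNorm (A.mulVec (x - y)) →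
      ¬ BddBelow {w : ℝ | ∃ φ : Fin L → ℝ, ∃ α : ℝ, 0 < α ∧
        w = g ⬝ᵥ x - g ⬝ᵥ y + φ ⬝ᵥ A.mulVec (y - x) + (φ ⬝ᵥ φ) / α + 2 * α * r} :=
    fun x y h => not_bddBelow_affine_dual _ _ (not_le.1 fun h' => h.not_ge ((h_iff x y).2 h'))
  refine ⟨?_, fun x _ y _ => ⟨h_feas x y, h_infeas x y⟩⟩
  have h_phi : ∀ x y : Fin n → ℝ, {w : ℝ | ∃ φ : Fin L → ℝ, ∃ α : ℝ, 0 < α ∧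
        w = gaussPhi A g r x y φ α} = {w : ℝ | ∃ φ : Fin L → ℝ, ∃ α : ℝ, 0 < α ∧
        w = g ⬝ᵥ x - g ⬝ᵥ y + φ ⬝ᵥ A.mulVec (y - x) + (φ ⬝ᵥ φ) / α + 2 * α * r} := by
    intro x y
    ext w
    refine exists_congr fun φ => exists_congr fun α => and_congr_right fun hα => ?_
    rw [gaussPhi_eq A g r x y φ hα]
  obtain ⟨z, hz⟩ := hXne
  have h_diag : euclNorm (A.mulVec (z - z)) ≤ 2 * Real.sqrt (2 * r) := by
    rw [h_iff, sub_self, mulVec_zero, zero_dotProduct]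
    positivity
  -- In the real-valued `sInf`, an infeasible pair contributes `0`, the value of the pair `(z, z)`.
  have h_set : {v : ℝ | ∃ x ∈ X, ∃ y ∈ X, v = sInf {w : ℝ | ∃ φ : Fin L → ℝ, ∃ α : ℝ, 0 < α ∧
        w = gaussPhi A g r x y φ α}} = {v : ℝ | ∃ x ∈ X, ∃ y ∈ X,
        euclNorm (A.mulVec (x - y)) ≤ 2 * Real.sqrt (2 * r) ∧ v = g ⬝ᵥ x - g ⬝ᵥ y} := by
    ext v
    simp only [h_phi, mem_ofPred_eq]
    constructor
    · rintro ⟨x, hx, y, hy, rfl⟩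
      by_cases h : euclNorm (A.mulVec (x - y)) ≤ 2 * Real.sqrt (2 * r)
      · exact ⟨x, hx, y, hy, h, h_feas x y h⟩
      · refine ⟨z, hz, z, hz, h_diag, ?_⟩
        rw [Real.sInf_of_not_bddBelow (h_infeas x y (not_le.1 h)), sub_self]
    · rintro ⟨x, hx, y, hy, h, rfl⟩
      exact ⟨x, hx, y, hy, (h_feas x y h).symm⟩
  have h_compact : IsCompact {v : ℝ | ∃ x ∈ X, ∃ y ∈ X,
      euclNorm (A.mulVec (x - y)) ≤ 2 * Real.sqrt (2 * r) ∧ v = g ⬝ᵥ x - g ⬝ᵥ y} := by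
    have h_closed : IsClosed {p : (Fin n → ℝ) × (Fin n → ℝ) |
        A.mulVec (p.2 - p.1) ⬝ᵥ A.mulVec (p.2 - p.1) ≤ 8 * r} :=
      isClosed_le (by fun_prop) continuous_const
    have h_cont : Continuous fun p : (Fin n → ℝ) × (Fin n → ℝ) => g ⬝ᵥ p.1 - g ⬝ᵥ p.2 := by
      fun_prop
    convert ((hXcp.prod hXcp).inter_right h_closed).image h_cont using 1
    ext v
    simp only [mem_ofPred_eq, mem_image, mem_inter_iff, mem_prod, Prod.exists, h_iff]
    grind
  have h_two : 2 * gaussPhiStar A g X r = sSup {v : ℝ | ∃ x ∈ X, ∃ y ∈ X,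
      euclNorm (A.mulVec (x - y)) ≤ 2 * Real.sqrt (2 * r) ∧ v = g ⬝ᵥ x - g ⬝ᵥ y} := by
    rw [gaussPhiStar, h_set]
    ring
  rw [h_two]
  exact h_compact.isGreatest_sSup ⟨_, z, hz, z, hz, h_diag, rfl⟩
end
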